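/- arXiv:1805.04261 — 2 statements merged into one kernel-verified Lean document; each statement's English description precedes it below -/
import Mathlib

section
/- Let d ≥ 1 and let σ be a sign pattern of length d+1 whose Descartes pair is (d, 0) (resp. (0, d)), and let ((pos_0, neg_0), (pos_1, neg_1), ..., (pos_{d−1}, neg_{d−1})) be the unique SAP for σ with pos_0 + neg_0 = d, so that (pos_0, neg_0) = (d, 0) (resp. (0, d)). Then for every ν ∈ {1, ..., ⌊d/2⌋}, every SAP for σ of the form ((d−2ν, 0), (pos_1, neg_1), ..., (pos_{d−1}, neg_{d−1})) (resp. ((0, d−2ν), (pos_1, neg_1), ..., (pos_{d−1}, neg_{d−1}))) is realizable with the sign pattern σ. -/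
open Polynomial

/-- Number of sign changes among consecutive entries `s 0, …, s n`. -/
def signChanges (s : ℕ → ℤ) (n : ℕ) : ℕ :=
  ((Finset.range n).filter (fun i => s i * s (i + 1) < 0)).card

/-- Number of sign preservations among consecutive entries `s 0, …, s n`. -/
def signPres (s : ℕ → ℤ) (n : ℕ) : ℕ :=
  ((Finset.range n).filter (fun i => 0 < s i * s (i + 1))).card

/-- `s` encodes a sign pattern of length `d+1` (entries `s 0, …, s d`, each `±1`,
first entry `+1`). -/
def IsSignPattern (d : ℕ) (s : ℕ → ℤ) : Prop :=
  s 0 = 1 ∧ ∀ i ≤ d, s i = 1 ∨ s i = -1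

/-- `pn k = (pos_k, neg_k)`, `k = 0, …, d-1`, is a sequence of admissible pairs (SAP)
for the sign pattern `s` of length `d+1`: each pair is admissible for the truncated
pattern `σ_k` (of length `d+1-k`, with sign changes `signChanges s (d-k)` and sign
preservations `signPres s (d-k)`), the last entry of `σ_k` is `(-1)^{pos_k}`, and the
Rolle-type inequalities and parity condition hold between consecutive pairs. -/
def IsSAP (d : ℕ) (s : ℕ → ℤ) (pn : ℕ → ℕ × ℕ) : Prop :=
  (∀ k < d,
    (pn k).1 ≤ signChanges s (d - k) ∧
    Even ((signChanges s (d - k) : ℤ) - (pn k).1) ∧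
    (pn k).2 ≤ signPres s (d - k) ∧
    Even ((signPres s (d - k) : ℤ) - (pn k).2) ∧
    s (d - k) = (-1) ^ (pn k).1) ∧
  (∀ k, k + 1 < d →
    (pn k).1 ≤ (pn (k + 1)).1 + 1 ∧
    (pn k).2 ≤ (pn (k + 1)).2 + 1 ∧
    (pn k).1 + (pn k).2 ≤ (pn (k + 1)).1 + (pn (k + 1)).2 + 1 ∧
    Even (((pn (k + 1)).1 : ℤ) + (pn (k + 1)).2 + 3 - (pn k).1 - (pn k).2))

/-- The `k`-th derivative of a real polynomial. -/
noncomputable def iterDeriv : ℕ → Polynomial ℝ → Polynomial ℝ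
  | 0, P => P
  | k + 1, P => Polynomial.derivative (iterDeriv k P)

/-- `P` has exactly `pos` positive real roots and exactly `neg` negative real roots,
all of them simple. -/
def CountRoots (P : Polynomial ℝ) (pos neg : ℕ) : Prop :=
  {x : ℝ | 0 < x ∧ P.eval x = 0}.ncard = pos ∧
  {x : ℝ | x < 0 ∧ P.eval x = 0}.ncard = neg ∧
  ∀ x : ℝ, P.eval x = 0 → (Polynomial.derivative P).eval x ≠ 0

/-- The couple (sign pattern `s`, SAP `pn`) of degree `d` is realizable: there is a
monic real polynomial of degree `d`, with all coefficients nonzero, whose coefficient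
signs define the pattern `s` (the sign of the coefficient of `x^(d-i)` is `s i`), and
such that for `k = 0, …, d-1` the `k`-th derivative has exactly `(pn k).1` positive and
`(pn k).2` negative real roots, all simple. -/
def Realizable (d : ℕ) (s : ℕ → ℤ) (pn : ℕ → ℕ × ℕ) : Prop :=
  ∃ P : Polynomial ℝ, P.Monic ∧ P.natDegree = d ∧
    (∀ j ≤ d, P.coeff j ≠ 0) ∧
    (∀ i ≤ d, 0 < (s i : ℝ) * P.coeff (d - i)) ∧
    ∀ k < d, CountRoots (iterDeriv k P) (pn k).1 (pn k).2

open Filter Topology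

lemma aux_eventually_pos (Q : ℝ[X]) (h : 0 < Q.leadingCoeff) :
    ∀ᶠ x in atTop, 0 < Q.eval x := by
  by_cases hd : Q.natDegree = 0
  · rw [Polynomial.eq_C_of_natDegree_eq_zero hd] at h ⊢
    have h' : 0 < Q.coeff 0 := by simpa using h
    exact Filter.Eventually.of_forall (fun x => by simpa using h')
  · exact (Q.tendsto_atTop_of_leadingCoeff_nonneg
      (Polynomial.natDegree_pos_iff_degree_pos.mp (Nat.pos_of_ne_zero hd)) h.le).eventually_gt_atTop 0

/-- alternating coefficients -/
def AltC (P : ℝ[X]) (d : ℕ) : Prop :=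
  P.natDegree = d ∧ ∀ j ≤ d, 0 < (-1 : ℝ) ^ j * P.coeff j

lemma AltC.pos {P : ℝ[X]} {d : ℕ} (h : AltC P d) {x : ℝ} (hx : x ≤ 0) : 0 < P.eval x := by
  rw [Polynomial.eval_eq_sum_range, h.1]
  have key : ∀ i ∈ Finset.range (d + 1),
      P.coeff i * x ^ i = ((-1 : ℝ) ^ i * P.coeff i) * (-x) ^ i := by
    intro i _
    rw [neg_pow x i]
    have : (-1 : ℝ) ^ i * (-1) ^ i = 1 := by rw [← mul_pow]; norm_num
    linear_combination (-(P.coeff i * x ^ i)) * this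
  rw [Finset.sum_congr rfl key]
  apply Finset.sum_pos'
  · intro i hi
    have := h.2 i (by simpa [Nat.lt_succ_iff] using hi)
    have : 0 ≤ (-x) ^ i := pow_nonneg (by linarith) _
    positivity
  · refine ⟨0, by simp, ?_⟩
    have := h.2 0 (Nat.zero_le _)
    simpa using this

structure PInv (P : ℝ[X]) (d m : ℕ) : Prop where
  alt : AltC P d
  tst : ∃ t : ℕ → ℝ, (∀ i j, i < j → j < d → t i < t j) ∧
    ∀ i < d, 0 < (-1 : ℝ) ^ (i + 1) * P.derivative.eval (t i)
  rts : ∃ S : Finset ℝ, S.card = m ∧ (∀ x, P.eval x = 0 ↔ x ∈ S) ∧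
    ∀ x ∈ S, P.derivative.eval x ≠ 0

lemma AltC.step {P : ℝ[X]} {d : ℕ} (h : AltC P d) {e : ℝ} (he : 0 < e) :
    AltC (P * (1 - C e * X)) (d + 1) := by
  have hc : ∀ j, (P * (1 - C e * X)).coeff (j + 1) = P.coeff (j + 1) - e * P.coeff j := by
    intro j
    have : P * (1 - C e * X) = P - C e * (P * X) := by ring
    rw [this, coeff_sub, coeff_C_mul, coeff_mul_X]
  have h0 : (P * (1 - C e * X)).coeff 0 = P.coeff 0 := by
    have : P * (1 - C e * X) = P - C e * (P * X) := by ring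
    rw [this, coeff_sub, coeff_C_mul]; simp
  have hs : ∀ j ≤ d + 1, 0 < (-1 : ℝ) ^ j * (P * (1 - C e * X)).coeff j := by
    intro j hj
    cases j with
    | zero => rw [h0]; exact h.2 0 (Nat.zero_le _)
    | succ j =>
      rw [hc]
      have h1 := mul_pos he (h.2 j (by omega))
      have h2 : 0 ≤ (-1 : ℝ) ^ (j + 1) * P.coeff (j + 1) := by
        by_cases hjd : j + 1 ≤ d
        · exact (h.2 _ hjd).le
        · rw [Polynomial.coeff_eq_zero_of_natDegree_lt (by rw [h.1]; omega)]; simp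
      have e1 : (-1 : ℝ) ^ (j + 1) * (P.coeff (j + 1) - e * P.coeff j) =
        (-1 : ℝ) ^ (j + 1) * P.coeff (j + 1) + e * ((-1 : ℝ) ^ j * P.coeff j) := by ring
      rw [e1]; linarith
  refine ⟨?_, hs⟩
  apply le_antisymm
  · refine (natDegree_mul_le).trans ?_
    rw [h.1]
    have : (1 - C e * X : ℝ[X]).natDegree ≤ 1 := by compute_degree
    omega
  · apply le_natDegree_of_ne_zero
    intro h0
    have := hs (d + 1) le_rfl
    rw [h0] at this; simp at this

lemma AltC.deriv {P : ℝ[X]} {d : ℕ} (h : AltC P (d + 1)) : AltC (-P.derivative) d := by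
  have hs : ∀ j ≤ d, 0 < (-1 : ℝ) ^ j * (-P.derivative).coeff j := by
    intro j hj
    have := h.2 (j + 1) (by omega)
    rw [coeff_neg, coeff_derivative]
    have e1 : (-1 : ℝ) ^ j * -(P.coeff (j + 1) * ((j : ℝ) + 1)) =
      ((-1 : ℝ) ^ (j + 1) * P.coeff (j + 1)) * ((j : ℝ) + 1) := by ring
    rw [e1]; positivity
  refine ⟨?_, hs⟩
  apply le_antisymm
  · rw [natDegree_neg]
    have := P.natDegree_derivative_le
    rw [h.1] at this; simpa using this
  · apply le_natDegree_of_ne_zero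
    intro h0
    have := hs d le_rfl
    rw [h0] at this; simp at this

lemma PInv.step {P : ℝ[X]} {d m : ℕ} (h : PInv P d m) : ∃ Q, PInv Q (d + 1) (m + 1) := by
  obtain ⟨ha, ⟨t, ht, hts⟩, S, hSc, hS, hS'⟩ := h
  have dQ : ∀ e x : ℝ, (derivative (P * (1 - C e * X))).eval x =
      P.derivative.eval x * (1 - e * x) - e * P.eval x := by
    intro e x
    simp [derivative_mul]; ring
  have E1 : ∀ᶠ e in 𝓝[>] (0 : ℝ), ∀ i ∈ Finset.range d,
      0 < (-1 : ℝ) ^ (i + 1) * (derivative (P * (1 - C e * X))).eval (t i) := by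
    rw [Filter.eventually_all_finset]
    intro i hi
    simp only [dQ]
    apply Filter.Eventually.filter_mono nhdsWithin_le_nhds
    have hcont : ContinuousAt (fun e : ℝ => (-1 : ℝ) ^ (i + 1) *
      (P.derivative.eval (t i) * (1 - e * t i) - e * P.eval (t i))) 0 := by fun_prop
    apply hcont.eventually_const_lt
    simpa using hts i (by simpa using hi)
  have E2 : ∀ᶠ e in 𝓝[>] (0 : ℝ), ∀ x ∈ S, 0 < 1 - e * x := by
    rw [Filter.eventually_all_finset]
    intro x hx
    apply Filter.Eventually.filter_mono nhdsWithin_le_nhds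
    have hcont : ContinuousAt (fun e : ℝ => 1 - e * x) 0 := by fun_prop
    apply hcont.eventually_const_lt
    simp
  obtain ⟨e, ⟨he1, he2⟩, he⟩ := ((E1.and E2).and self_mem_nhdsWithin).exists
  have he : 0 < e := he
  have hA := ha.step he
  set Q := P * (1 - C e * X) with hQ
  have hA' := hA.deriv
  have hlc : 0 < (C ((-1 : ℝ) ^ (d + 1)) * Q.derivative).leadingCoeff := by
    rw [leadingCoeff_mul, leadingCoeff_C, leadingCoeff, ← natDegree_neg, hA'.1]
    have := hA'.2 d le_rfl
    rw [coeff_neg] at this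
    rw [pow_succ]; linarith
  have E3 := aux_eventually_pos _ hlc
  have E4 : ∀ᶠ x in (atTop : Filter ℝ), ∀ i ∈ Finset.range d, t i < x := by
    rw [Filter.eventually_all_finset]
    intro i _
    exact eventually_gt_atTop _
  obtain ⟨T, hT1, hT2⟩ := (E3.and E4).exists
  refine ⟨Q, hA, ⟨Function.update t d T, ?_, ?_⟩, insert e⁻¹ S, ?_, ?_, ?_⟩
  · intro i j hij hj
    rw [Function.update_of_ne (by omega : i ≠ d)]
    by_cases hjd : j = d
    · subst hjd; rw [Function.update_self]; exact hT2 i (by simpa using hij)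
    · rw [Function.update_of_ne hjd]; exact ht i j hij (by omega)
  · intro i hi
    by_cases hid : i = d
    · subst hid; rw [Function.update_self]; simpa using hT1
    · rw [Function.update_of_ne hid]; exact he1 i (by simp; omega)
  · rw [Finset.card_insert_of_notMem, hSc]
    intro hmem
    have := he2 _ hmem
    rw [mul_inv_cancel₀ he.ne'] at this
    simp at this
  · intro x
    rw [Finset.mem_insert, ← hS, hQ]
    simp only [eval_mul, eval_sub, eval_one, eval_C, eval_X, mul_eq_zero]
    rw [or_comm]
    apply or_congr_left
    constructor
    · intro h
      exact eq_inv_of_mul_eq_one_right (by linarith)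
    · rintro rfl
      rw [mul_inv_cancel₀ he.ne', sub_self]
  · intro x hx
    rw [dQ]
    rcases Finset.mem_insert.mp hx with rfl | hx
    · rw [mul_inv_cancel₀ he.ne']
      have : P.eval e⁻¹ ≠ 0 := by
        intro h0
        have := he2 _ ((hS _).mp h0)
        rw [mul_inv_cancel₀ he.ne'] at this
        simp at this
      simp [he.ne', this]
    · rw [(hS x).mpr hx]
      have := (he2 x hx).ne'
      simp [hS' x hx, this]

lemma PInv.iter {P : ℝ[X]} {d m : ℕ} (h : PInv P d m) (n : ℕ) : ∃ Q, PInv Q (d + n) (m + n) := by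
  induction n with
  | zero => exact ⟨P, h⟩
  | succ n ih => obtain ⟨Q, hQ⟩ := ih; exact hQ.step

lemma pinv_one : PInv 1 0 0 := by
  refine ⟨⟨by simp, ?_⟩, ⟨fun _ => 0, by simp, by simp⟩, ∅, by simp, by simp, by simp⟩
  intro j hj
  obtain rfl : j = 0 := by omega
  simp

lemma pinv_even (ν : ℕ) (hν : 1 ≤ ν) : ∃ P, PInv P (2 * ν) 0 := by
  obtain ⟨H, hH⟩ := pinv_one.iter (2 * ν)
  simp only [zero_add] at hH
  obtain ⟨ha, ⟨t, ht, hts⟩, -⟩ := hH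
  have hlc : 0 < H.leadingCoeff := by
    have := ha.2 (2 * ν) le_rfl
    rw [leadingCoeff, ha.1]
    simpa using this
  obtain ⟨A, hA⟩ := (aux_eventually_pos H hlc).exists_forall_of_atTop
  obtain ⟨M, hM⟩ := (isCompact_Icc (a := (0 : ℝ)) (b := A)).bddBelow_image
    (f := fun x => H.eval x) (by fun_prop)
  have hb : ∀ x, 0 < (H + C (|M| + 1)).eval x := by
    intro x
    rw [eval_add, eval_C]
    have := abs_nonneg M
    have := neg_abs_le M
    by_cases h0 : x ≤ 0
    · have := ha.pos h0; linarith
    · by_cases h1 : A ≤ x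
      · have := hA x h1; linarith
      · have : M ≤ H.eval x := hM ⟨x, ⟨by linarith, by linarith⟩, rfl⟩
        linarith
  refine ⟨H + C (|M| + 1), ⟨by rw [natDegree_add_C, ha.1], ?_⟩, ⟨t, ht, ?_⟩, ∅, rfl, ?_, by simp⟩
  · intro j hj
    have := ha.2 j hj
    rw [coeff_add, coeff_C]
    split_ifs with h
    · subst h
      have hM0 := abs_nonneg M
      rw [pow_zero, one_mul] at *
      linarith
    · simpa using this
  · simpa using hts
  · intro x
    simpa using (hb x).ne'

/-- maximal number of distinct roots -/
lemma hyp_deriv {Q : ℝ[X]} {n : ℕ} (hd : Q.natDegree = n + 1) (h : Q.roots.toFinset.card = n + 1) :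
    Q.derivative.roots.toFinset.card = n := by
  have h1 := Q.card_roots_toFinset_le_derivative
  have h2 := Q.derivative.roots.toFinset_card_le
  have h3 := Q.derivative.card_roots'
  have h4 := Q.natDegree_derivative_le
  omega

lemma CountRoots.C_mul {Q : ℝ[X]} {p n : ℕ} (h : CountRoots Q p n) {c : ℝ} (hc : c ≠ 0) :
    CountRoots (C c * Q) p n := by
  simpa [CountRoots, hc] using h

lemma CountRoots.comp_neg {Q : ℝ[X]} {p n : ℕ} (h : CountRoots Q p n) :
    CountRoots (Q.comp (-X)) n p := by
  obtain ⟨h1, h2, h3⟩ := h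
  refine ⟨?_, ?_, ?_⟩
  · rw [← h2, ← Set.ncard_image_of_injective _ (neg_injective (G := ℝ))]
    congr 1
    ext x
    simp
  · rw [← h1, ← Set.ncard_image_of_injective _ (neg_injective (G := ℝ))]
    congr 1
    ext x
    simp
  · intro x hx
    have := h3 (-x) (by simpa using hx)
    simpa [derivative_comp] using this

lemma count_hyp {Q : ℝ[X]} {n : ℕ} {c : ℝ} (hc : c ≠ 0) (ha : AltC (C c * Q) n)
    (h : Q.roots.toFinset.card = n) : CountRoots Q n 0 := by
  have hd : Q.natDegree = n := by rw [← ha.1, natDegree_C_mul hc]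
  have hne : ∀ x ≤ 0, Q.eval x ≠ 0 := by
    intro x hx h0
    have := ha.pos hx
    simp [h0] at this
  have hQ : Q ≠ 0 := by rintro rfl; exact hne 0 le_rfl (by simp)
  refine ⟨?_, ?_, ?_⟩
  · rw [← h, ← Set.ncard_coe_finset]
    congr 1
    ext x
    simp only [Set.mem_ofPred_eq, Finset.mem_coe, Multiset.mem_toFinset, mem_roots hQ, IsRoot.def]
    refine ⟨fun h => h.2, fun h => ⟨?_, h⟩⟩
    by_contra hx
    exact hne x (not_lt.mp hx) h
  · rw [← Set.ncard_empty ℝ]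
    congr 1
    ext x
    simp only [Set.mem_ofPred_eq, Set.mem_empty_iff_false, iff_false, not_and]
    exact fun hx => hne x hx.le
  · have h3 := Q.card_roots'
    have hnd : Q.roots.Nodup := by
      rw [← Multiset.toFinset_card_eq_card_iff_nodup]
      have := Q.roots.toFinset_card_le
      omega
    intro x hx hx'
    have := (one_lt_rootMultiplicity_iff_isRoot hQ (t := x)).mpr ⟨hx, hx'⟩
    have h5 := Multiset.nodup_iff_count_le_one.mp hnd x
    rw [count_roots] at h5
    omega

lemma PInv.deriv_roots {P : ℝ[X]} {d m : ℕ} (h : PInv P (d + 1) m) :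
    P.derivative.roots.toFinset.card = d := by
  obtain ⟨ha, ⟨t, ht, hts⟩, -⟩ := h
  have hA := ha.deriv
  have hne : P.derivative ≠ 0 := by
    intro h0
    have := hA.2 0 (Nat.zero_le _)
    simp [h0] at this
  have ex : ∀ i, ∃ r, i < d → t i < r ∧ r < t (i + 1) ∧ P.derivative.eval r = 0 := by
    intro i
    by_cases hi : i < d
    · have h1 := hts i (by omega)
      have h2 := hts (i + 1) (by omega)
      have hlt := ht i (i + 1) (by omega) (by omega)
      have hcont : ContinuousOn (fun x => (-1 : ℝ) ^ (i + 1) * P.derivative.eval x)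
        (Set.Icc (t i) (t (i + 1))) := by fun_prop
      have := intermediate_value_Ioo' hlt.le hcont
      obtain ⟨r, hr, hr0⟩ := this (show (0 : ℝ) ∈ _ from ⟨by rw [pow_succ] at h2; linarith, h1⟩)
      refine ⟨r, fun _ => ⟨hr.1, hr.2, ?_⟩⟩
      simpa using hr0
    · exact ⟨0, fun h => absurd h hi⟩
  choose r hr using ex
  have hmono : ∀ i j, i < j → j < d → r i < r j := by
    intro i j hij hj
    have h1 := (hr i (by omega)).2.1
    have h2 := (hr j hj).1
    have h3 : t (i + 1) ≤ t j := by
      rcases Nat.lt_or_ge (i + 1) j with h | h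
      · exact (ht _ _ h (by omega)).le
      · rw [show i + 1 = j by omega]
    linarith
  apply le_antisymm
  · have h2 := P.derivative.roots.toFinset_card_le
    have h3 := P.derivative.card_roots'
    have h4 := hA.1
    rw [natDegree_neg] at h4
    omega
  · have hc : ((Finset.range d).image r).card = d := by
      rw [Finset.card_image_of_injOn, Finset.card_range]
      intro i hi j hj hij
      simp only [Finset.coe_range, Set.mem_Iio] at hi hj
      rcases lt_trichotomy i j with h | h | h
      · exact absurd hij (hmono _ _ h hj).ne
      · exact h
      · exact absurd hij (hmono _ _ h hi).ne'
    rw [← hc]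
    apply Finset.card_le_card
    intro x hx
    obtain ⟨i, hi, rfl⟩ := Finset.mem_image.mp hx
    rw [Multiset.mem_toFinset, mem_roots hne]
    exact (hr i (by simpa using hi)).2.2

lemma core (d ν : ℕ) (hν : 1 ≤ ν) (hd : 2 * ν ≤ d) :
    ∃ P : ℝ[X], AltC P d ∧ CountRoots P (d - 2 * ν) 0 ∧
      ∀ k, 1 ≤ k → k < d → CountRoots (iterDeriv k P) (d - k) 0 := by
  obtain ⟨P0, h0⟩ := pinv_even ν hν
  obtain ⟨P, hP⟩ := h0.iter (d - 2 * ν)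
  rw [show 2 * ν + (d - 2 * ν) = d by omega, zero_add] at hP
  refine ⟨P, hP.alt, ?_, ?_⟩
  · obtain ⟨S, hSc, hS, hS'⟩ := hP.rts
    refine ⟨?_, ?_, ?_⟩
    · rw [← hSc, ← Set.ncard_coe_finset]
      congr 1
      ext x
      simp only [Set.mem_ofPred_eq, Finset.mem_coe, ← hS]
      refine ⟨fun h => h.2, fun h => ⟨?_, h⟩⟩
      by_contra hx
      exact (hP.alt.pos (not_lt.mp hx)).ne' h
    · rw [← Set.ncard_empty ℝ]
      congr 1
      ext x
      simp only [Set.mem_ofPred_eq, Set.mem_empty_iff_false, iff_false, not_and]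
      exact fun hx => (hP.alt.pos hx.le).ne'
    · exact fun x hx => hS' x ((hS x).mp hx)
  · have key : ∀ k, k + 1 ≤ d → AltC (C ((-1 : ℝ) ^ (k + 1)) * iterDeriv (k + 1) P) (d - (k + 1)) ∧
        (iterDeriv (k + 1) P).roots.toFinset.card = d - (k + 1) := by
      intro k
      induction k with
      | zero =>
        intro hk
        obtain ⟨n, rfl⟩ : ∃ n, d = n + 1 := ⟨d - 1, by omega⟩
        refine ⟨?_, ?_⟩
        · have := hP.alt.deriv
          simpa [iterDeriv] using this
        · simpa [iterDeriv] using hP.deriv_roots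
      | succ k ih =>
        intro hk
        obtain ⟨i1, i2⟩ := ih (by omega)
        obtain ⟨n, hn⟩ : ∃ n, d - (k + 1) = n + 1 := ⟨d - (k + 1) - 1, by omega⟩
        rw [hn] at i1 i2
        rw [show d - (k + 1 + 1) = n by omega]
        refine ⟨?_, ?_⟩
        · have := i1.deriv
          rw [derivative_C_mul] at this
          have e : C ((-1 : ℝ) ^ (k + 1 + 1)) * iterDeriv (k + 1 + 1) P =
            -(C ((-1 : ℝ) ^ (k + 1)) * derivative (iterDeriv (k + 1) P)) := by
            rw [pow_succ _ (k + 1)]; simp [iterDeriv]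
          rw [e]; exact this
        · apply hyp_deriv _ i2
          rw [← i1.1, natDegree_C_mul (by positivity)]
    intro k hk1 hk
    obtain ⟨j, rfl⟩ : ∃ j, k = j + 1 := ⟨k - 1, by omega⟩
    obtain ⟨a, b⟩ := key j hk.le
    exact count_hyp (by positivity) a b

lemma iterDeriv_C_mul (c : ℝ) (P : ℝ[X]) (k : ℕ) : iterDeriv k (C c * P) = C c * iterDeriv k P := by
  induction k with
  | zero => rfl
  | succ k ih => simp [iterDeriv, ih]

lemma iterDeriv_comp (P : ℝ[X]) (k : ℕ) :
    iterDeriv k (P.comp (-X)) = C ((-1 : ℝ) ^ k) * (iterDeriv k P).comp (-X) := by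
  induction k with
  | zero => simp [iterDeriv]
  | succ k ih => simp [iterDeriv, ih, derivative_comp, pow_succ]

lemma filter_full {d : ℕ} {p : ℕ → Prop} [DecidablePred p]
    (h : ((Finset.range d).filter p).card = d) : ∀ i < d, p i := by
  intro i hi
  have : (Finset.range d).filter p = Finset.range d :=
    Finset.eq_of_subset_of_card_le (Finset.filter_subset _ _) (by simp [h])
  have h2 : i ∈ (Finset.range d).filter p := by rw [this]; simpa using hi
  exact (Finset.mem_filter.mp h2).2

lemma filter_mono0 {d k : ℕ} {p : ℕ → Prop} [DecidablePred p] (hk : k ≤ d)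
    (h : ((Finset.range d).filter p).card = 0) : ((Finset.range k).filter p).card = 0 := by
  have : ((Finset.range k).filter p).card ≤ ((Finset.range d).filter p).card :=
    Finset.card_le_card (Finset.filter_subset_filter _ (by simpa using hk))
  omega

lemma filter_le {k : ℕ} {p : ℕ → Prop} [DecidablePred p] :
    ((Finset.range k).filter p).card ≤ k := by
  simpa using Finset.card_filter_le (Finset.range k) p

/-- If the Descartes pair of `σ` is `(d, 0)` (resp. `(0, d)`) and `pn` is the
unique SAP for `σ` with `pos_0 + neg_0 = d`, then for every `ν` with `1 ≤ ν` and
`2ν ≤ d`, every SAP for `σ` obtained from `pn` by replacing its first pair with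
`(d-2ν, 0)` (resp. `(0, d-2ν)`) is realizable with the sign pattern `σ`. -/
theorem stmt13 (d : ℕ) (hd : 1 ≤ d) (s : ℕ → ℤ) (hs : IsSignPattern d s)
    (pn : ℕ → ℕ × ℕ) (hpn : IsSAP d s pn) (hsum : (pn 0).1 + (pn 0).2 = d) :
    ((signChanges s d = d ∧ signPres s d = 0) →
      ∀ ν : ℕ, 1 ≤ ν → 2 * ν ≤ d →
        ∀ pn' : ℕ → ℕ × ℕ, pn' 0 = (d - 2 * ν, 0) →
          (∀ k, 1 ≤ k → k < d → pn' k = pn k) →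
          IsSAP d s pn' → Realizable d s pn') ∧
    ((signChanges s d = 0 ∧ signPres s d = d) →
      ∀ ν : ℕ, 1 ≤ ν → 2 * ν ≤ d →
        ∀ pn' : ℕ → ℕ × ℕ, pn' 0 = (0, d - 2 * ν) →
          (∀ k, 1 ≤ k → k < d → pn' k = pn k) →
          IsSAP d s pn' → Realizable d s pn') := by
  constructor
  · rintro ⟨hc, hp⟩ ν hν hνd pn' h0 hk _
    have hsgn : ∀ i ≤ d, s i = (-1) ^ i := by
      intro i
      induction i with
      | zero => intro _; simpa using hs.1
      | succ i ih =>
        intro hi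
        have h1 := filter_full hc i (by omega)
        simp only [ih (by omega)] at h1
        rcases hs.2 (i + 1) hi with h | h <;> rw [h] at h1 ⊢ <;>
          rcases neg_one_pow_eq_or ℤ i with h' | h' <;> rw [h'] at h1 <;> rw [pow_succ, h'] <;>
          simp at h1 ⊢
    have hpnk : ∀ k < d, pn k = (d - k, 0) := by
      have hneg : ∀ k < d, (pn k).2 = 0 := by
        intro k hk
        have := (hpn.1 k hk).2.2.1
        have h2 : signPres s (d - k) = 0 := filter_mono0 (Nat.sub_le d k) hp
        omega
      intro k
      induction k with
      | zero =>
        intro hk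
        have := hneg 0 hk
        ext <;> simp <;> omega
      | succ k ih =>
        intro hk
        have h1 := (hpn.2 k hk).1
        rw [ih (by omega)] at h1
        have h2 := (hpn.1 (k + 1) hk).1
        have h3 : signChanges s (d - (k + 1)) ≤ d - (k + 1) := filter_le
        have := hneg (k + 1) hk
        ext <;> simp at * <;> omega
    obtain ⟨P, hA, hC, hD⟩ := core d ν hν hνd
    have hlc : P.leadingCoeff = P.coeff d := by rw [leadingCoeff, hA.1]
    have hl := hA.2 d le_rfl
    have hl0 : P.coeff d ≠ 0 := by intro h; rw [h] at hl; simp at hl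
    have hsg : ∀ i ≤ d, 0 < (s i : ℝ) * (C (P.coeff d)⁻¹ * P).coeff (d - i) := by
      intro i hi
      rw [hsgn i hi, coeff_C_mul]
      have h1 := hA.2 (d - i) (by omega)
      have h2 := mul_pos h1 (inv_pos.mpr hl)
      rw [mul_inv] at h2
      have e : ((-1 : ℝ) ^ d)⁻¹ = (-1) ^ (d - i) * (-1) ^ i := by
        rw [← pow_add, Nat.sub_add_cancel hi, ← inv_pow]; norm_num
      have e2 : (-1 : ℝ) ^ (d - i) * (-1) ^ (d - i) = 1 := by rw [← mul_pow]; norm_num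
      rw [e] at h2
      push_cast
      refine h2.trans_eq ?_
      linear_combination ((-1 : ℝ) ^ i * (P.coeff d)⁻¹ * P.coeff (d - i)) * e2
    refine ⟨C (P.coeff d)⁻¹ * P, ?_, ?_, ?_, hsg, ?_⟩
    · rw [Monic, leadingCoeff_mul, leadingCoeff_C, hlc, inv_mul_cancel₀ hl0]
    · rw [natDegree_C_mul (inv_ne_zero hl0), hA.1]
    · intro j hj h
      have := hsg (d - j) (by omega)
      rw [Nat.sub_sub_self hj, h] at this
      simp at this
    · intro k hkd
      rw [iterDeriv_C_mul]
      apply CountRoots.C_mul _ (inv_ne_zero hl0)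
      rcases Nat.eq_zero_or_pos k with rfl | hk0
      · rw [h0]; exact hC
      · rw [hk k hk0 hkd, hpnk k hkd]; exact hD k hk0 hkd
  · rintro ⟨hc, hp⟩ ν hν hνd pn' h0 hk _
    have hsgn : ∀ i ≤ d, s i = 1 := by
      intro i
      induction i with
      | zero => intro _; simpa using hs.1
      | succ i ih =>
        intro hi
        have h1 := filter_full hp i (by omega)
        simp only [ih (by omega)] at h1
        rcases hs.2 (i + 1) hi with h | h
        · exact h
        · rw [h] at h1; simp at h1
    have hpnk : ∀ k < d, pn k = (0, d - k) := by
      have hneg : ∀ k < d, (pn k).1 = 0 := by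
        intro k hk
        have := (hpn.1 k hk).1
        have h2 : signChanges s (d - k) = 0 := filter_mono0 (Nat.sub_le d k) hc
        omega
      intro k
      induction k with
      | zero =>
        intro hk
        have := hneg 0 hk
        ext <;> simp <;> omega
      | succ k ih =>
        intro hk
        have h1 := (hpn.2 k hk).2.1
        rw [ih (by omega)] at h1
        have h2 := (hpn.1 (k + 1) hk).2.2.1
        have h3 : signPres s (d - (k + 1)) ≤ d - (k + 1) := filter_le
        have := hneg (k + 1) hk
        ext <;> simp at * <;> omega
    obtain ⟨P, hA, hC, hD⟩ := core d ν hν hνd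
    have hl := hA.2 d le_rfl
    set c : ℝ := (-1 : ℝ) ^ d * P.coeff d with hcdef
    have hcf : ∀ j, (P.comp (-X)).coeff j = (-1) ^ j * P.coeff j := by
      intro j
      rw [show (-X : ℝ[X]) = C (-1) * X by simp, comp_C_mul_X_coeff, mul_comm]
    have hnd : (C c⁻¹ * P.comp (-X)).natDegree = d := by
      rw [natDegree_C_mul (inv_ne_zero hl.ne'), natDegree_comp, hA.1]; simp
    have hsg : ∀ i ≤ d, 0 < (s i : ℝ) * (C c⁻¹ * P.comp (-X)).coeff (d - i) := by
      intro i hi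
      rw [hsgn i hi, coeff_C_mul, hcf]
      have h1 := hA.2 (d - i) (by omega)
      have h2 := mul_pos (inv_pos.mpr hl) h1
      simpa using h2
    refine ⟨C c⁻¹ * P.comp (-X), ?_, hnd, ?_, hsg, ?_⟩
    · rw [Monic, leadingCoeff, hnd, coeff_C_mul, hcf, ← hcdef, inv_mul_cancel₀ hl.ne']
    · intro j hj h
      have := hsg (d - j) (by omega)
      rw [Nat.sub_sub_self hj, h] at this
      simp at this
    · intro k hkd
      rw [iterDeriv_C_mul, iterDeriv_comp]
      apply CountRoots.C_mul _ (inv_ne_zero hl.ne')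
      apply CountRoots.C_mul _ (by positivity)
      apply CountRoots.comp_neg
      rcases Nat.eq_zero_or_pos k with rfl | hk0
      · rw [h0]; exact hC
      · rw [hk k hk0 hkd, hpnk k hkd]; exact hD k hk0 hkd
end

section
/- Let h_{d,m} denote the number of sequences of admissible pairs for the all-pluses sign pattern of length d+1 whose first pair is (pos_0, neg_0) = (0, m). Then for all d ≥ 1: h_{d,d} = 1 and h_{d,m} = 0 for every m > d. Moreover, for all d ≥ 4: h_{d,m} = h_{d,m+2} + h_{d−1,m−1} for every m ≥ 1, and if d is even then h_{d,0} = h_{d,2}. -/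
open Polynomial

/-- The all-pluses sign pattern. -/
def allPlus : ℕ → ℤ := fun _ => 1

/-- Extend a finite sequence of pairs to `ℕ` (by `(0,0)` beyond `d`). -/
def extendPN (d : ℕ) (pn : Fin d → ℕ × ℕ) : ℕ → ℕ × ℕ :=
  fun k => if hk : k < d then pn ⟨k, hk⟩ else (0, 0)

/-- `A d` is the number of SAPs for the all-pluses sign pattern of length `d+1`. -/
noncomputable def A (d : ℕ) : ℕ :=
  {pn : Fin d → ℕ × ℕ | IsSAP d allPlus (extendPN d pn)}.ncard

/-- `hNum d m` is the number of SAPs for the all-pluses sign pattern of length `d+1`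
whose first pair is `(0, m)`. -/
noncomputable def hNum (d m : ℕ) : ℕ :=
  {pn : Fin d → ℕ × ℕ |
    IsSAP d allPlus (extendPN d pn) ∧ extendPN d pn 0 = (0, m)}.ncard

lemma sc_allPlus (n : ℕ) : signChanges allPlus n = 0 := by
  simp [signChanges, allPlus]

lemma sp_allPlus (n : ℕ) : signPres allPlus n = n := by
  simp [signPres, allPlus]

lemma isSAP_iff (d : ℕ) (f : ℕ → ℕ × ℕ) : IsSAP d allPlus f ↔
    (∀ k < d, (f k).1 = 0 ∧ (f k).2 ≤ d - k ∧ (f k).2 % 2 = (d - k) % 2) ∧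
    (∀ k, k + 1 < d → (f k).2 ≤ (f (k + 1)).2 + 1) := by
  unfold IsSAP
  simp only [sc_allPlus, sp_allPlus, Int.even_iff]
  constructor
  · rintro ⟨h1, h2⟩
    refine ⟨fun k hk => ?_, fun k hk => ?_⟩
    · have := h1 k hk
      omega
    · have := h2 k hk
      omega
  · rintro ⟨h1, h2⟩
    refine ⟨fun k hk => ?_, fun k hk => ?_⟩
    · obtain ⟨a, b, c⟩ := h1 k hk
      refine ⟨by omega, by omega, by omega, by omega, ?_⟩
      simp [allPlus, a]
    · have := h2 k hk
      have := h1 k (by omega)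
      have := h1 (k + 1) hk
      omega

def SS (d m : ℕ) : Set (Fin d → ℕ × ℕ) :=
  {pn | IsSAP d allPlus (extendPN d pn) ∧ extendPN d pn 0 = (0, m)}

def TT (d m : ℕ) : Set (Fin d → ℕ × ℕ) :=
  {pn | IsSAP d allPlus (extendPN d pn) ∧ m ≤ (extendPN d pn 0).2 + 1}

lemma hNum_eq (d m : ℕ) : hNum d m = (SS d m).ncard := rfl

lemma sap_finite (d : ℕ) : {pn : Fin d → ℕ × ℕ | IsSAP d allPlus (extendPN d pn)}.Finite := by
  apply (Set.finite_Iic (fun _ : Fin d => ((0, d) : ℕ × ℕ))).subset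
  intro pn h i
  have h1 := ((isSAP_iff _ _).1 h).1 i.1 i.2
  simp only [extendPN, i.2, dite_true] at h1
  exact ⟨by simpa using h1.1, by simp only [Fin.eta] at h1; show (pn i).2 ≤ d; omega⟩

lemma ext_cons_zero (d : ℕ) (a : ℕ × ℕ) (q : Fin d → ℕ × ℕ) :
    extendPN (d + 1) (Fin.cons a q : Fin (d + 1) → ℕ × ℕ) 0 = a := by
  simp [extendPN]

lemma ext_cons_succ (d : ℕ) (a : ℕ × ℕ) (q : Fin d → ℕ × ℕ) (k : ℕ) :
    extendPN (d + 1) (Fin.cons a q : Fin (d + 1) → ℕ × ℕ) (k + 1) = extendPN d q k := by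
  by_cases h : k < d
  · have h' : k + 1 < d + 1 := by omega
    unfold extendPN
    rw [dif_pos h', dif_pos h]
    exact Fin.cons_succ (α := fun _ => ℕ × ℕ) a q ⟨k, h⟩
  · simp [extendPN, h]

lemma sap_cons (d : ℕ) (hd : 1 ≤ d) (a : ℕ × ℕ) (q : Fin d → ℕ × ℕ) :
    IsSAP (d + 1) allPlus (extendPN (d + 1) (Fin.cons a q : Fin (d + 1) → ℕ × ℕ)) ↔
      IsSAP d allPlus (extendPN d q) ∧ a.1 = 0 ∧ a.2 ≤ d + 1 ∧ a.2 % 2 = (d + 1) % 2 ∧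
        a.2 ≤ (extendPN d q 0).2 + 1 := by
  rw [isSAP_iff, isSAP_iff]
  constructor
  · rintro ⟨h1, h2⟩
    have e0 := h1 0 (by omega)
    have e1 := h2 0 (by omega)
    rw [ext_cons_succ] at e1
    rw [ext_cons_zero] at e0 e1
    refine ⟨⟨fun k hk => ?_, fun k hk => ?_⟩, e0.1, e0.2.1, e0.2.2, e1⟩
    · have := h1 (k + 1) (by omega)
      rw [ext_cons_succ] at this
      simpa using this
    · have := h2 (k + 1) (by omega)
      rwa [ext_cons_succ, ext_cons_succ] at this
  · rintro ⟨⟨h1, h2⟩, a1, a2, a3, a4⟩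
    refine ⟨fun k hk => ?_, fun k hk => ?_⟩
    · cases k with
      | zero => rw [ext_cons_zero]; exact ⟨a1, a2, a3⟩
      | succ k => rw [ext_cons_succ]; simpa using h1 k (by omega)
    · cases k with
      | zero => rw [ext_cons_succ, ext_cons_zero]; exact a4
      | succ k => rw [ext_cons_succ, ext_cons_succ]; exact h2 k (by omega)

lemma hNum_step (d m : ℕ) (hd : 1 ≤ d) (h1 : m ≤ d + 1) (h2 : m % 2 = (d + 1) % 2) :
    hNum (d + 1) m = (TT d m).ncard := by
  have : SS (d + 1) m = (fun q => (Fin.cons ((0, m) : ℕ × ℕ) q : Fin (d + 1) → ℕ × ℕ)) '' TT d m := by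
    ext pn
    constructor
    · intro h
      refine ⟨Fin.tail pn, ?_⟩
      obtain ⟨a, q, rfl⟩ : ∃ a q, pn = (Fin.cons a q : Fin (d + 1) → ℕ × ℕ) :=
        ⟨pn 0, Fin.tail pn, (Fin.cons_self_tail pn).symm⟩
      obtain ⟨h3, h4⟩ := h
      rw [ext_cons_zero] at h4
      subst h4
      rw [sap_cons _ hd] at h3
      exact ⟨⟨h3.1, h3.2.2.2.2⟩, rfl⟩
    · rintro ⟨q, ⟨h3, h4⟩, rfl⟩
      exact ⟨(sap_cons _ hd _ _).2 ⟨h3, rfl, h1, h2, h4⟩, ext_cons_zero _ _ _⟩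
  rw [hNum_eq, this]
  exact Set.ncard_image_of_injective _ (Fin.cons_right_injective (α := fun _ => ℕ × ℕ) _)

lemma hNum_bad (d m : ℕ) (hd : 1 ≤ d) (h : d < m ∨ m % 2 ≠ d % 2) : hNum d m = 0 := by
  have : SS d m = ∅ := by
    ext pn
    simp only [Set.mem_empty_iff_false, iff_false]
    rintro ⟨h1, h2⟩
    have := ((isSAP_iff _ _).1 h1).1 0 (by omega)
    rw [h2] at this
    simp only at this
    omega
  rw [hNum_eq, this, Set.ncard_empty]

lemma TT_split (d m : ℕ) (hd : 1 ≤ d) (h2 : (m + 1) % 2 = (d + 1) % 2) :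
    (TT d (m + 1)).ncard = (TT d (m + 3)).ncard + hNum d m := by
  have : TT d (m + 1) = TT d (m + 3) ∪ SS d m := by
    ext pn
    simp only [TT, SS, Set.mem_union, Set.mem_ofPred_eq, ← and_or_left]
    refine and_congr_right fun h => ?_
    have := ((isSAP_iff _ _).1 h).1 0 (by omega)
    rw [Prod.ext_iff]
    simp only
    omega
  rw [this, hNum_eq]
  refine Set.ncard_union_eq ?_ ((sap_finite d).subset fun _ h => h.1)
    ((sap_finite d).subset fun _ h => h.1)
  rw [Set.disjoint_left]
  rintro pn ⟨_, h3⟩ ⟨_, h4⟩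
  rw [h4] at h3
  simp only at h3
  omega

lemma TT_empty (d m : ℕ) (hd : 1 ≤ d) (h : d + 1 < m) : (TT d m).ncard = 0 := by
  have : TT d m = ∅ := by
    ext pn
    simp only [Set.mem_empty_iff_false, iff_false]
    rintro ⟨h1, h2⟩
    have := ((isSAP_iff _ _).1 h1).1 0 (by omega)
    omega
  rw [this, Set.ncard_empty]

lemma hNum_rec (d m : ℕ) (hd : 1 ≤ d) :
    hNum (d + 1) (m + 1) = hNum (d + 1) (m + 3) + hNum d m := by
  by_cases hp : (m + 1) % 2 = (d + 1) % 2
  · by_cases hm : m ≤ d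
    · rw [hNum_step d (m + 1) hd (by omega) hp, TT_split d m hd hp]
      congr 1
      by_cases h3 : m + 3 ≤ d + 1
      · rw [hNum_step d (m + 3) hd h3 (by omega)]
      · rw [TT_empty d _ hd (by omega), hNum_bad _ _ (by omega) (by omega)]
    · rw [hNum_bad _ _ (by omega) (by omega), hNum_bad _ _ (by omega) (by omega),
        hNum_bad _ _ (by omega) (by omega)]
  · rw [hNum_bad _ _ (by omega) (by omega), hNum_bad _ _ (by omega) (by omega),
        hNum_bad _ _ (by omega) (by omega)]

lemma hNum_one : hNum 1 1 = 1 := by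
  have : SS 1 1 = {fun _ => (0, 1)} := by
    ext pn
    simp only [SS, Set.mem_ofPred_eq, Set.mem_singleton_iff, isSAP_iff]
    constructor
    · rintro ⟨_, h⟩
      funext i
      have : i = 0 := Subsingleton.elim _ _
      subst this
      simpa [extendPN] using h
    · rintro rfl
      simp [extendPN]
  rw [hNum_eq, this, Set.ncard_singleton]

lemma hNum_diag (d : ℕ) : hNum (d + 1) (d + 1) = 1 := by
  induction d with
  | zero => exact hNum_one
  | succ d ih => rw [hNum_rec _ _ (by omega), ih, hNum_bad _ _ (by omega) (by omega)]

lemma hNum_zero (d : ℕ) (hd : 1 ≤ d) (h : (d + 1) % 2 = 0) : hNum (d + 1) 0 = hNum (d + 1) 2 := by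
  rw [hNum_step d 0 hd (by omega) (by omega), hNum_step d 2 hd (by omega) (by omega)]
  congr 1
  ext pn
  refine and_congr_right fun h => ?_
  have := ((isSAP_iff _ _).1 h).1 0 (by omega)
  omega

/-- Basic values and the recurrence for the numbers `hNum d m` of SAPs for the
all-pluses sign pattern of length `d+1` whose first pair is `(0, m)`. -/
theorem stmt14 :
    (∀ d : ℕ, 1 ≤ d → hNum d d = 1 ∧ ∀ m : ℕ, d < m → hNum d m = 0) ∧
    (∀ d : ℕ, 4 ≤ d →
      (∀ m : ℕ, 1 ≤ m → hNum d m = hNum d (m + 2) + hNum (d - 1) (m - 1)) ∧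
      (Even d → hNum d 0 = hNum d 2)) := by
  refine ⟨fun d hd => ⟨?_, fun m hm => hNum_bad d m hd (Or.inl hm)⟩, fun d hd => ⟨fun m hm => ?_, fun he => ?_⟩⟩
  · obtain ⟨d, rfl⟩ := Nat.exists_eq_add_of_le' hd
    exact hNum_diag d
  · obtain ⟨d, rfl⟩ := Nat.exists_eq_add_of_le' (show 1 ≤ d by omega)
    obtain ⟨m, rfl⟩ := Nat.exists_eq_add_of_le' hm
    exact hNum_rec d m (by omega)
  · obtain ⟨d, rfl⟩ := Nat.exists_eq_add_of_le' (show 1 ≤ d by omega)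
    exact hNum_zero d (by omega) (Nat.even_iff.1 he)
end
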